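/- Let p > 2 be a prime and a, b integers with p ∤ a, and assume p does not divide T^{a,b}_n for any n < p. Then the natural density of {n ∈ ℕ : p ∣ M^{a,b}_n} exists and equals |{n < p−2 : p ∣ M^{a,b}_n}|/p + 2·|{m < p−1 : b·T^{a,b}_m ≡ T^{a,b}_{p−1}·T^{a,b}_{m+1} (mod p)}|/((p−1)(p+1)) + 2·|{m < p−1 : b·T^{a,b}_m ≡ T^{a,b}_{m+1} (mod p)}|/((p−1)p(p+1)). -/

import Mathlib

open Polynomial Filter

/-- The generalized central trinomial coefficient `T^{a,b}_n`:
the coefficient of `X^n` in `(a + bX + aX^2)^n`. -/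
noncomputable def genTrinomial (a b : ℤ) (n : ℕ) : ℤ :=
  ((C a + C b * X + C a * X ^ 2) ^ n).coeff n

/-- The generalized Motzkin number `M^{a,b}_n`:
the coefficient of `X^n` in `(a + bX + aX^2)^n * (1 - X^2)`. -/
noncomputable def genMotzkin (a b : ℤ) (n : ℕ) : ℤ :=
  (((C a + C b * X + C a * X ^ 2) ^ n) * (1 - X ^ 2)).coeff n

def tri {R : Type*} [CommRing R] (a b : R) : ℕ → ℤ → R
  | 0 => fun j => if j = 0 then 1 else 0
  | n + 1 => fun j => a * tri a b n (j - 1) + b * tri a b n j + a * tri a b n (j + 1)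

section ring
variable {R : Type*} [CommRing R] (a b : R)

lemma tri_zero (j : ℤ) : tri a b 0 j = if j = 0 then 1 else 0 := rfl

lemma tri_succ (n : ℕ) (j : ℤ) : tri a b (n + 1) j =
    a * tri a b n (j - 1) + b * tri a b n j + a * tri a b n (j + 1) := rfl

lemma tri_neg (n : ℕ) : ∀ j : ℤ, tri a b n (-j) = tri a b n j := by
  induction n with
  | zero => intro j; simp [tri_zero]
  | succ n ih =>
    intro j
    rw [tri_succ, tri_succ, show -j - 1 = -(j + 1) by ring, show -j + 1 = -(j - 1) by ring,
      ih, ih, ih]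
    ring

lemma tri_vanish (n : ℕ) : ∀ j : ℤ, (n : ℤ) < j → tri a b n j = 0 := by
  induction n with
  | zero => intro j hj; rw [tri_zero, if_neg]; push_cast at hj; omega
  | succ n ih =>
    intro j hj
    push_cast at hj
    rw [tri_succ, ih _ (by omega), ih _ (by omega), ih _ (by omega)]
    ring

lemma tri_vanish' (n : ℕ) (j : ℤ) (h : j < -(n : ℤ)) : tri a b n j = 0 := by
  rw [← tri_neg]; exact tri_vanish a b n _ (by omega)

lemma tri_coeff (n : ℕ) : ∀ k : ℕ,
    ((C a + C b * X + C a * X ^ 2) ^ n).coeff k = tri a b n ((k : ℤ) - n) := by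
  induction n with
  | zero => intro k; simp [tri_zero, coeff_one]
  | succ n ih =>
    intro k
    rw [pow_succ, show (C a + C b * X + C a * X ^ 2 : R[X]) ^ n * (C a + C b * X + C a * X ^ 2)
      = C a * (C a + C b * X + C a * X ^ 2 : R[X]) ^ n
        + C b * ((C a + C b * X + C a * X ^ 2 : R[X]) ^ n * X)
        + C a * ((C a + C b * X + C a * X ^ 2 : R[X]) ^ n * X ^ 2) by ring]
    rw [coeff_add, coeff_add, coeff_C_mul, coeff_C_mul, coeff_C_mul, tri_succ, coeff_mul_X_pow', ih]
    push_cast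
    rcases k with _ | _ | k
    · rw [coeff_mul_X_zero, if_neg (by omega), tri_vanish' a b n (((0:ℕ):ℤ) - (n + 1)) (by push_cast; omega),
        tri_vanish' a b n (((0:ℕ):ℤ) - (n + 1) - 1) (by push_cast; omega)]
      rw [show (((0:ℕ):ℤ) - (n + 1) + 1) = ((0:ℕ):ℤ) - n by ring]
      ring
    · rw [coeff_mul_X, if_neg (by omega), ih, tri_vanish' a b n (_ - _ - _) (by push_cast; omega)]
      rw [show (((0+1:ℕ):ℤ) - (n + 1) + 1) = ((0+1:ℕ):ℤ) - n by ring,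
        show (((0+1:ℕ):ℤ) - (n + 1)) = ((0:ℕ):ℤ) - n by push_cast; ring]
      ring
    · rw [coeff_mul_X, if_pos (by omega), ih, ih]
      rw [show (((k+1+1:ℕ):ℤ) - (n + 1) + 1) = ((k+1+1:ℕ):ℤ) - n by ring,
        show (((k+1+1:ℕ):ℤ) - (n + 1)) = ((k+1:ℕ):ℤ) - n by push_cast; ring,
        show k + 1 + 1 - 2 = k by omega,
        show (((k+1:ℕ):ℤ) - n - 1) = (k:ℤ) - n by push_cast; ring]
      ring

lemma tri_deriv (n : ℕ) : ∀ j : ℤ, (j : R) * tri a b (n + 1) j =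
    (n + 1) * a * (tri a b n (j - 1) - tri a b n (j + 1)) := by
  induction n with
  | zero =>
    intro j
    simp only [tri_succ, tri_zero]
    by_cases h0 : j = 0
    · subst h0; simp
    by_cases h1 : j = 1
    · subst h1; simp
    by_cases h2 : j = -1
    · subst h2; simp
    rw [if_neg (by omega), if_neg (by omega), if_neg (by omega)]; ring
  | succ n ih =>
    intro j
    have h1 := ih (j - 1)
    have h2 := ih j
    have h3 := ih (j + 1)
    have e1 := tri_succ a b n (j - 1)
    have e2 := tri_succ a b n (j + 1)
    rw [tri_succ a b (n + 1) j]
    simp only [show j - 1 + 1 = j by ring, show j + 1 - 1 = j by ring] at *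
    push_cast at *
    linear_combination a * h1 + b * h2 + a * h3 - (n+1) * a * e1 + (n+1) * a * e2

lemma tri_T (n : ℕ) : tri a b (n + 1) 0 = b * tri a b n 0 + 2 * a * tri a b n 1 := by
  rw [tri_succ, show (0:ℤ) - 1 = - 1 by ring, tri_neg]; simp; ring

lemma tri_U (n : ℕ) :
    tri a b (n + 1) 1 = a * tri a b n 0 + b * tri a b n 1 + a * tri a b n 2 := by
  rw [tri_succ]; norm_num

lemma tri_rec (n : ℕ) : ((n : R) + 2) * tri a b (n + 2) 0 =
    (2 * n + 3) * b * tri a b (n + 1) 0 - (n + 1) * (b ^ 2 - 4 * a ^ 2) * tri a b n 0 := by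
  have h1 := tri_T a b n
  have h2 := tri_T a b (n + 1)
  have h3 := tri_U a b n
  have h4 := tri_deriv a b n 1
  norm_num at h4
  linear_combination (n + 2) * h2 + (n+1) * 2 * a * h3 + 2 * a * h4 - (n+1) * b * h1

lemma tri_top (n : ℕ) : tri a b n n = a ^ n := by
  induction n with
  | zero => simp [tri_zero]
  | succ n ih =>
    rw [tri_succ, tri_vanish a b n (_ + 1) (by push_cast; omega),
      tri_vanish a b n ((n+1:ℕ):ℤ) (by push_cast; omega),
      show ((n+1:ℕ):ℤ) - 1 = n by push_cast; ring, ih]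
    ring

lemma tri_lin (f : ℕ → ℤ → R)
    (hf : ∀ n i, f (n + 1) i = a * f n (i - 1) + b * f n i + a * f n (i + 1)) (c d : R)
    (h0 : ∀ i, f 0 i = c * tri a b 0 i + d * tri a b 0 (i + 1)) (n : ℕ) :
    ∀ i, f n i = c * tri a b n i + d * tri a b n (i + 1) := by
  induction n with
  | zero => exact h0
  | succ n ih =>
    intro i
    rw [hf, ih, ih, ih, tri_succ, tri_succ, show i - 1 + 1 = i by ring,
      show i + 1 - 1 = i by ring]
    ring

end ring

lemma tri_map (a b : ℤ) (R : Type*) [CommRing R] (n : ℕ) : ∀ j,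
    ((tri a b n j : ℤ) : R) = tri (a : R) (b : R) n j := by
  induction n with
  | zero => intro j; simp [tri_zero]
  | succ n ih => intro j; simp [tri_succ, ih]

lemma genT_cast (a b : ℤ) (R : Type*) [CommRing R] (n : ℕ) :
    ((genTrinomial a b n : ℤ) : R) = tri (a : R) (b : R) n 0 := by
  rw [genTrinomial, tri_coeff, tri_map]; simp

lemma genM_cast (a b : ℤ) (R : Type*) [CommRing R] (n : ℕ) :
    ((genMotzkin a b n : ℤ) : R) = tri (a : R) (b : R) n 0 - tri (a : R) (b : R) n 2 := by
  rw [genMotzkin, mul_sub, mul_one, coeff_sub, coeff_mul_X_pow']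
  push_cast
  rw [tri_coeff, tri_map, sub_self]
  congr 1
  split_ifs with h
  · rw [tri_coeff, tri_map, ← tri_neg]
    congr 1
    push_cast [h]; ring
  · rw [tri_vanish]; simp; omega

section modp
variable {p : ℕ} [hp : Fact p.Prime] (a b : ZMod p)

lemma tri_p (j : ℤ) : tri a b p j =
    a * tri a b 0 (j - p) + b * tri a b 0 j + a * tri a b 0 (j + p) := by
  have hp0 : 0 < p := hp.out.pos
  by_cases h1 : (p : ℤ) < j
  · rw [tri_vanish _ _ _ _ h1]; simp only [tri_zero]
    rw [if_neg (by omega), if_neg (by omega), if_neg (by omega)]; ring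
  by_cases h2 : j < -(p : ℤ)
  · rw [tri_vanish' _ _ _ _ h2]; simp only [tri_zero]
    rw [if_neg (by omega), if_neg (by omega), if_neg (by omega)]; ring
  obtain ⟨k, hk⟩ : ∃ k : ℕ, j = (k : ℤ) - p := ⟨(j + p).toNat, by omega⟩
  have := tri_coeff a b p k
  rw [← hk] at this
  rw [← this, add_pow_char, add_pow_char, mul_pow, mul_pow, ← C_pow, ← C_pow, ZMod.pow_card,
    ZMod.pow_card, ← pow_mul, coeff_add, coeff_add, coeff_C_mul_X_pow, coeff_C_mul_X_pow, coeff_C]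
  simp only [tri_zero, mul_ite, mul_one, mul_zero]
  have e1 : (j - p = 0) = (k = 2 * p) := by apply propext; omega
  have e2 : (j = 0) = (k = p) := by apply propext; omega
  have e3 : (j + p = 0) = (k = 0) := by apply propext; omega
  simp only [e1, e2, e3]
  ring

lemma tri_add_p (n : ℕ) : ∀ j : ℤ, tri a b (n + p) j =
    a * tri a b n (j - p) + b * tri a b n j + a * tri a b n (j + p) := by
  induction n with
  | zero => intro j; rw [zero_add, tri_p]
  | succ n ih =>
    intro j
    rw [show n + 1 + p = (n + p) + 1 by ring, tri_succ, ih, ih, ih, tri_succ, tri_succ, tri_succ,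
      show j - 1 - p = j - p - 1 by ring, show j + 1 - p = j - p + 1 by ring,
      show j - 1 + p = j + p - 1 by ring, show j + 1 + p = j + p + 1 by ring]
    ring

lemma tri_block (r : ℕ) (j : ℤ) (c d : ZMod p)
    (h0 : ∀ i : ℤ, tri a b r (j + p * i) = c * tri a b 0 i + d * tri a b 0 (i + 1)) (n : ℕ) :
    tri a b (p * n + r) j = c * tri a b n 0 + d * tri a b n 1 := by
  have := tri_lin a b (fun n i => tri a b (p * n + r) (j + p * i)) (fun n i => by
    rw [show p * (n + 1) + r = (p * n + r) + p by ring, tri_add_p,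
      show j + p * i - p = j + p * (i - 1) by ring, show j + p * i + p = j + p * (i + 1) by ring])
    c d (fun i => by simpa using h0 i) n 0
  simpa using this

lemma lucas (n r : ℕ) (hr : r < p) : tri a b (p * n + r) 0 = tri a b n 0 * tri a b r 0 := by
  rw [tri_block a b r 0 (tri a b r 0) 0]
  · ring
  intro i
  rw [tri_zero, zero_mul, add_zero, zero_add]
  split_ifs with h
  · subst h; simp
  · rcases lt_or_gt_of_ne h with h | h
    · rw [tri_vanish', mul_zero]; nlinarith
    · rw [tri_vanish, mul_zero]; nlinarith

lemma motz_small (n r : ℕ) (hr : r + 2 < p) :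
    tri a b (p * n + r) 2 = tri a b n 0 * tri a b r 2 := by
  rw [tri_block a b r 2 (tri a b r 2) 0]
  · ring
  intro i
  rw [tri_zero, zero_mul, add_zero]
  split_ifs with h
  · subst h; simp
  · rcases lt_or_gt_of_ne h with h | h
    · rw [tri_vanish', mul_zero]; nlinarith
    · rw [tri_vanish, mul_zero]; nlinarith

lemma motz_big (n r : ℕ) (hr : r < p) (hp2 : 2 < p) :
    tri a b (p * n + r) 2 = tri a b r 2 * tri a b n 0 + tri a b r (p - 2) * tri a b n 1 := by
  rw [tri_block a b r 2 (tri a b r 2) (tri a b r (p - 2))]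
  intro i
  rw [tri_zero, tri_zero]
  by_cases h : i = 0
  · subst h; simp
  by_cases h' : i = -1
  · subst h'
    rw [← tri_neg]
    simp; congr 1
  rw [if_neg h, if_neg (by omega), mul_zero, mul_zero, add_zero]
  rcases lt_or_gt_of_ne h with h | h
  · rw [tri_vanish']; have : i ≤ -2 := by omega
    nlinarith
  · rw [tri_vanish]; nlinarith

lemma cast_pm1 : ((p - 1 : ℕ) : ZMod p) = -1 := by
  rw [Nat.cast_sub hp.out.one_le]; simp

lemma reflect (hp2 : 2 < p) (k : ℕ) :
    (∀ m, k + m = p - 1 → (b^2-4*a^2)^k * tri a b m 0 = tri a b (p-1) 0 * tri a b k 0) ∧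
    (∀ m, k + 1 + m = p - 1 →
      (b^2-4*a^2)^(k+1) * tri a b m 0 = tri a b (p-1) 0 * tri a b (k+1) 0) := by
  induction k with
  | zero =>
    constructor
    · intro m hm
      rw [show m = p - 1 by omega]; simp [tri_zero]
    · intro m hm
      have h := tri_rec a b m
      rw [show m + 1 = p - 1 by omega] at h
      have hm' : (m : ZMod p) = -2 := by
        have : ((m + 2 : ℕ) : ZMod p) = 0 := by rw [show m + 2 = p by omega]; simp
        push_cast at this; linear_combination this
      have h1 : tri a b (0 + 1) 0 = b := by rw [tri_succ]; simp [tri_zero]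
      rw [h1]
      rw [hm'] at h
      linear_combination -h
  | succ k ih =>
    refine ⟨ih.2, fun m hm => ?_⟩
    have i1 := ih.1 (m + 2) (by omega)
    have i2 := ih.2 (m + 1) (by omega)
    have h := tri_rec a b m
    have h' := tri_rec a b k
    have hm' : (m : ZMod p) = -3 - k := by
      have : ((m + k + 3 : ℕ) : ZMod p) = 0 := by rw [show m + k + 3 = p by omega]; simp
      push_cast at this; linear_combination this
    have hk : ((k + 2 : ℕ) : ZMod p) ≠ 0 := by
      intro h0
      rw [ZMod.natCast_eq_zero_iff] at h0
      have := Nat.le_of_dvd (by omega) h0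
      omega
    apply mul_left_cancel₀ hk
    rw [hm'] at h
    push_cast
    rw [show k + 1 + 1 = k + 2 by ring]
    linear_combination (-(b^2-4*a^2)^(k+1)) * h - (k + 1) * (b^2-4*a^2) * i1 + (2 * k + 3) * b * i2
      - tri a b (p-1) 0 * h'

variable (hp2 : 2 < p) (ha : a ≠ 0) (hT : ∀ n < p, tri a b n 0 ≠ 0)
include hp2 hT

lemma D_ne : b^2-4*a^2 ≠ 0 := by
  intro h
  have := (reflect a b hp2 (p-1)).1 0 (by omega)
  rw [h, zero_pow (by omega)] at this
  have h2 := hT (p-1) (by omega)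
  have : tri a b (p-1) 0 * tri a b (p-1) 0 = 0 := by rw [← this]; ring
  exact h2 (mul_self_eq_zero.mp this)

lemma chi_sq : tri a b (p-1) 0 * tri a b (p-1) 0 = 1 := by
  have := (reflect a b hp2 (p-1)).1 0 (by omega)
  rw [ZMod.pow_card_sub_one_eq_one (D_ne a b hp2 hT)] at this
  rw [← this]; simp [tri_zero]

lemma T_ne (n : ℕ) : tri a b n 0 ≠ 0 := by
  induction n using Nat.strong_induction_on with
  | _ n ih =>
    by_cases h : n < p
    · exact hT n h
    rw [← Nat.div_add_mod n p, lucas a b _ _ (Nat.mod_lt _ (by omega))]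
    exact mul_ne_zero (ih _ (Nat.div_lt_self (by omega) (by omega)))
      (hT _ (Nat.mod_lt _ (by omega)))

include ha

lemma facts : b = b * tri a b (p-1) 0 + 2 * a * tri a b (p-1) 1 ∧
    0 = a * tri a b (p-1) 0 + b * tri a b (p-1) 1 + a * tri a b (p-1) 2 ∧
    tri a b (p-1) ((p:ℤ) - 2) * a = -b ∧ tri a b (p-2) ((p:ℤ) - 2) * a = 1 := by
  have e : p - 1 + 1 = p := by omega
  refine ⟨?_, ?_, ?_, ?_⟩
  · rw [← tri_T, e, tri_p]; simp only [tri_zero]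
    rw [if_neg (show ¬ ((0:ℤ) - p = 0) by omega), if_neg (show ¬ ((0:ℤ) + p = 0) by omega)]; simp
  · rw [← tri_U, e, tri_p]; simp only [tri_zero]
    rw [if_neg (by omega), if_neg (by omega), if_neg (by omega)]; simp
  · have h := tri_succ a b (p-1) ((p:ℤ) - 1)
    rw [e, tri_p] at h; simp only [tri_zero] at h
    rw [if_neg (by omega), if_neg (by omega), if_neg (by omega),
      tri_vanish a b (p-1) (_ + 1) (by omega), show (p:ℤ) - 1 = ((p - 1 : ℕ) : ℤ) by omega,
      tri_top, ZMod.pow_card_sub_one_eq_one ha, show ((p - 1 : ℕ) : ℤ) - 1 = p - 2 by omega] at h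
    linear_combination -h
  · rw [show (p:ℤ) - 2 = ((p-2:ℕ):ℤ) by omega, tri_top, ← pow_succ,
      show p - 2 + 1 = p - 1 by omega, ZMod.pow_card_sub_one_eq_one ha]

lemma motz_2 (n : ℕ) : 2 * a^2 * (tri a b (p * n + (p-2)) 0 - tri a b (p * n + (p-2)) 2) =
    b * tri a b (p-1) 0 * tri a b n 0 - tri a b (n+1) 0 := by
  rw [lucas a b _ _ (by omega), motz_big a b _ _ (by omega) hp2]
  obtain ⟨f1, f2, f3, f4⟩ := facts a b hp2 ha hT
  have h1 := tri_T a b (p-2)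
  have h2 := tri_U a b (p-2)
  have h3 := (reflect a b hp2 0).2 (p-2) (by omega)
  have h4 : tri a b (0 + 1) 0 = b := by rw [tri_succ]; simp [tri_zero]
  rw [h4] at h3
  rw [show p - 2 + 1 = p - 1 by omega] at h1 h2
  have h5 := tri_T a b n
  have key : 2 * a^2 * (tri a b (p-2) 0 - tri a b (p-2) 2) = b * tri a b (p-1) 0 - b := by
    linear_combination 2 * a * h2 - b * h1 - h3 + f1
  linear_combination tri a b n 0 * key - 2 * a * tri a b n 1 * f4 + h5

lemma motz_1 (n : ℕ) : 2 * a^2 * (tri a b (p * n + (p-1)) 0 - tri a b (p * n + (p-1)) 2) =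
    b * tri a b (n+1) 0 - (b^2-4*a^2) * tri a b (p-1) 0 * tri a b n 0 := by
  rw [lucas a b _ _ (by omega), motz_big a b _ _ (by omega) hp2]
  obtain ⟨f1, f2, f3, f4⟩ := facts a b hp2 ha hT
  have h5 := tri_T a b n
  have key : 2 * a^2 * (tri a b (p-1) 0 - tri a b (p-1) 2) =
      b ^ 2 - (b^2-4*a^2) * tri a b (p-1) 0 := by
    linear_combination 2 * a * f2 - b * f1
  linear_combination tri a b n 0 * key - 2 * a * tri a b n 1 * f3 - b * h5

end modp
section dens

def HasD (p : ℕ) (s : ℕ → ℝ) (c : ℝ) : Prop :=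
  ∃ K : ℝ, 0 ≤ K ∧ ∀ n : ℕ, |∑ i ∈ Finset.range n, s i - c * n| ≤ K * (Nat.log p n + 1)

lemma sum_block (p : ℕ) (s : ℕ → ℝ) (N : ℕ) : ∑ i ∈ Finset.range (p * N), s i =
    ∑ i ∈ Finset.range N, ∑ r ∈ Finset.range p, s (p * i + r) := by
  induction N with
  | zero => simp
  | succ N ih => rw [mul_add, mul_one, Finset.sum_range_add, ih, Finset.sum_range_succ]

lemma one_step (p : ℕ) (hp : 0 < p) (s : ℕ → ℝ) (h0 : ∀ i, 0 ≤ s i) (h1 : ∀ i, s i ≤ 1) (n : ℕ) :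
    |∑ i ∈ Finset.range n, s i -
      ∑ i ∈ Finset.range (n / p), ∑ r ∈ Finset.range p, s (p * i + r)| ≤ p := by
  have : ∑ i ∈ Finset.range n, s i = ∑ i ∈ Finset.range (p * (n / p) + n % p), s i := by
    rw [Nat.div_add_mod]
  rw [this, Finset.sum_range_add, sum_block, add_sub_cancel_left,
    abs_of_nonneg (Finset.sum_nonneg fun i _ => h0 _)]
  calc _ ≤ ∑ i ∈ Finset.range (n % p), (1 : ℝ) := Finset.sum_le_sum fun i _ => h1 _
    _ = ((n % p : ℕ) : ℝ) := by simp
    _ ≤ p := by exact_mod_cast (Nat.mod_lt _ hp).le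

lemma lin_err (p : ℕ) (hp : 0 < p) (c : ℝ) (n : ℕ) :
    |c * n - c * p * (n / p : ℕ)| ≤ |c| * p := by
  have h : (n : ℝ) = p * (n / p : ℕ) + (n % p : ℕ) := by exact_mod_cast (Nat.div_add_mod n p).symm
  have h2 : c * n - c * p * (n / p : ℕ) = c * (n % p : ℕ) := by linear_combination c * h
  rw [h2, abs_mul, Nat.abs_cast]
  gcongr
  exact (Nat.mod_lt _ hp).le

lemma sum_shape (p : ℕ) (hp : 0 < p) (s s' α : ℕ → ℝ)
    (hs : ∀ i, ∀ r < p - 1, s (p * i + r) = α r) (hs' : ∀ i, s (p * i + (p - 1)) = s' i) (N : ℕ) :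
    ∑ i ∈ Finset.range N, ∑ r ∈ Finset.range p, s (p * i + r) =
      (∑ r ∈ Finset.range (p - 1), α r) * N + ∑ i ∈ Finset.range N, s' i := by
  have : ∀ i, ∑ r ∈ Finset.range p, s (p * i + r) = (∑ r ∈ Finset.range (p - 1), α r) + s' i := by
    intro i
    conv_lhs => rw [show p = p - 1 + 1 by omega]
    rw [Finset.sum_range_succ, show p - 1 + 1 = p by omega, hs']
    congr 1
    exact Finset.sum_congr rfl fun r hr => hs i r (Finset.mem_range.mp hr)
  simp only [this, Finset.sum_add_distrib, Finset.sum_const, Finset.card_range, nsmul_eq_mul]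
  ring

lemma step_bound (p : ℕ) (hp : 1 < p) (s s' α : ℕ → ℝ) (h0 : ∀ i, 0 ≤ s i) (h1 : ∀ i, s i ≤ 1)
    (hs : ∀ i, ∀ r < p - 1, s (p * i + r) = α r) (hs' : ∀ i, s (p * i + (p - 1)) = s' i)
    (c c' : ℝ) (hc : c * p = ∑ r ∈ Finset.range (p - 1), α r + c') (n : ℕ) :
    |∑ i ∈ Finset.range n, s i - c * n| ≤
      |∑ i ∈ Finset.range (n / p), s' i - c' * (n / p : ℕ)| + (p + |c| * p) := by
  have e1 := one_step p (by omega) s h0 h1 n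
  rw [sum_shape p (by omega) s s' α hs hs'] at e1
  have e2 := lin_err p (by omega) c n
  rw [hc] at e2
  rw [abs_le] at *
  have := abs_le.mp (le_refl |∑ i ∈ Finset.range (n / p), s' i - c' * (n / p : ℕ)|)
  constructor <;> nlinarith

lemma dens_pair (p : ℕ) (hp : 1 < p) (s s' α β : ℕ → ℝ)
    (h0 : ∀ i, 0 ≤ s i) (h1 : ∀ i, s i ≤ 1) (h0' : ∀ i, 0 ≤ s' i) (h1' : ∀ i, s' i ≤ 1)
    (hs : ∀ i, ∀ r < p - 1, s (p * i + r) = α r) (hs' : ∀ i, s (p * i + (p - 1)) = s' i)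
    (ht : ∀ i, ∀ r < p - 1, s' (p * i + r) = β r) (ht' : ∀ i, s' (p * i + (p - 1)) = s i) :
    HasD p s (((∑ r ∈ Finset.range (p - 1), α r) * p + ∑ r ∈ Finset.range (p - 1), β r) /
      (((p : ℝ) - 1) * (p + 1))) := by
  set A := ∑ r ∈ Finset.range (p - 1), α r with hA
  set B := ∑ r ∈ Finset.range (p - 1), β r with hB
  have hp' : (1 : ℝ) < p := by exact_mod_cast hp
  have n1 : (p : ℝ) - 1 ≠ 0 := by linarith
  have n2 : (p : ℝ) + 1 ≠ 0 := by linarith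
  obtain ⟨c, hc⟩ : ∃ c, c = (A * p + B) / (((p : ℝ) - 1) * (p + 1)) := ⟨_, rfl⟩
  obtain ⟨c', hc'⟩ : ∃ c, c = (B * p + A) / (((p : ℝ) - 1) * (p + 1)) := ⟨_, rfl⟩
  rw [← hc]
  have k1 : c * p = A + c' := by rw [hc, hc']; field_simp; ring
  have k2 : c' * p = B + c := by rw [hc, hc']; field_simp; ring
  have q1 := step_bound p hp s s' α h0 h1 hs hs' c c' k1
  have q2 := step_bound p hp s' s β h0' h1' ht ht' c' c k2
  have a1 := abs_nonneg c
  have a2 := abs_nonneg c'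
  have b1 : 0 ≤ |c| * p := by positivity
  have b2 : 0 ≤ |c'| * p := by positivity
  refine ⟨p + |c| * p + |c'| * p, by positivity, ?_⟩
  suffices h : ∀ n : ℕ,
      |∑ i ∈ Finset.range n, s i - c * n| ≤ (p + |c| * p + |c'| * p) * (Nat.log p n + 1) ∧
      |∑ i ∈ Finset.range n, s' i - c' * n| ≤ (p + |c| * p + |c'| * p) * (Nat.log p n + 1) from
    fun n => (h n).1
  intro n
  induction n using Nat.strong_induction_on with
  | _ n ih =>
    have r1 := q1 n
    have r2 := q2 n
    by_cases hn : n < p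
    · rw [Nat.div_eq_of_lt hn] at r1 r2
      rw [Nat.log_of_lt hn]
      simp at r1 r2 ⊢
      constructor <;> linarith
    · have hn : p ≤ n := by omega
      obtain ⟨i1, i2⟩ := ih (n / p) (Nat.div_lt_self (by omega) hp)
      rw [Nat.log_of_one_lt_of_le hp hn]
      push_cast
      constructor <;> nlinarith

lemma HasD.tendsto {p : ℕ} (hp : 1 < p) {s : ℕ → ℝ} {c : ℝ} (h : HasD p s c) :
    Tendsto (fun N : ℕ => (∑ i ∈ Finset.range N, s i) / N) atTop (nhds c) := by
  obtain ⟨K, hK, h⟩ := h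
  have hlp : 0 < Real.log p := Real.log_pos (by exact_mod_cast hp)
  have l1 : Tendsto (fun N : ℕ => Real.log N / N) atTop (nhds 0) := by
    have := Real.isLittleO_log_id_atTop.tendsto_div_nhds_zero
    exact this.comp tendsto_natCast_atTop_atTop
  have l2 : Tendsto (fun N : ℕ => 1 / (N : ℝ)) atTop (nhds 0) := tendsto_one_div_atTop_nhds_zero_nat
  have l3 : Tendsto (fun N : ℕ => K * (Real.log N / N / Real.log p + 1 / (N : ℝ))) atTop
      (nhds 0) := by
    have := ((l1.div_const (Real.log p)).add l2).const_mul K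
    simpa using this
  rw [tendsto_iff_dist_tendsto_zero]
  refine squeeze_zero' (Eventually.of_forall fun _ => dist_nonneg) ?_ l3
  filter_upwards [eventually_gt_atTop 0] with N hN
  have hN' : (0 : ℝ) < N := by exact_mod_cast hN
  rw [Real.dist_eq]
  have e : (∑ i ∈ Finset.range N, s i) / N - c = (∑ i ∈ Finset.range N, s i - c * N) / N := by
    field_simp
  rw [e, abs_div, Nat.abs_cast, div_le_iff₀ hN']
  refine (h N).trans ?_
  have hl : (Nat.log p N : ℝ) ≤ Real.log N / Real.log p := Real.natLog_le_logb N p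
  have e2 : K * (Real.log N / N / Real.log p + 1 / (N : ℝ)) * N =
      K * (Real.log N / Real.log p + 1) := by field_simp
  rw [e2]
  gcongr

lemma dens_final (p : ℕ) (hp : 2 < p) (s f g α : ℕ → ℝ) (cf cg : ℝ)
    (h0 : ∀ i, 0 ≤ s i) (h1 : ∀ i, s i ≤ 1)
    (hs : ∀ i, ∀ r < p - 2, s (p * i + r) = α r)
    (hf : ∀ i, s (p * i + (p - 2)) = f i) (hg : ∀ i, s (p * i + (p - 1)) = g i)
    (hF : HasD p f cf) (hG : HasD p g cg) :
    HasD p s ((∑ r ∈ Finset.range (p - 2), α r + cf + cg) / p) := by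
  obtain ⟨K, hK, hF⟩ := hF
  obtain ⟨L, hL, hG⟩ := hG
  set A := ∑ r ∈ Finset.range (p - 2), α r with hA
  have hp' : (0 : ℝ) < p := by exact_mod_cast (by omega : 0 < p)
  obtain ⟨c, hc⟩ : ∃ c, c = (A + cf + cg) / p := ⟨_, rfl⟩
  rw [← hc]
  have hc : c * p = A + cf + cg := by rw [hc]; field_simp
  have b1 : 0 ≤ |c| * p := by positivity
  refine ⟨K + L + p + |c| * p, by positivity, fun n => ?_⟩
  have e1 := one_step p (by omega) s h0 h1 n
  have e2 := lin_err p (by omega) c n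
  have e3 : ∀ i, ∑ r ∈ Finset.range p, s (p * i + r) = A + f i + g i := by
    intro i
    conv_lhs => rw [show p = p - 2 + 1 + 1 by omega]
    rw [Finset.sum_range_succ, Finset.sum_range_succ, show p - 2 + 1 + 1 = p by omega,
      show p - 2 + 1 = p - 1 by omega, hf, hg]
    congr 2
    exact Finset.sum_congr rfl fun r hr => hs i r (Finset.mem_range.mp hr)
  simp only [e3, Finset.sum_add_distrib, Finset.sum_const, Finset.card_range, nsmul_eq_mul] at e1
  have e4 := hF (n / p)
  have e5 := hG (n / p)
  rw [hc] at e2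
  have hl : (Nat.log p (n / p) : ℝ) ≤ Nat.log p n := by
    exact_mod_cast Nat.log_mono_right (Nat.div_le_self n p)
  have hl0 : (0 : ℝ) ≤ Nat.log p n := by positivity
  have e4' : K * (Nat.log p (n / p) + 1) ≤ K * (Nat.log p n + 1) := by gcongr
  have e5' : L * (Nat.log p (n / p) + 1) ≤ L * (Nat.log p n + 1) := by gcongr
  have e6 : p + |c| * p ≤ (p + |c| * p) * (Nat.log p n + 1) := by nlinarith
  rw [abs_le] at *
  constructor <;> linarith

end dens

open scoped Classical in
noncomputable def ind {p : ℕ} [Fact p.Prime] (a b u v : ZMod p) (m : ℕ) : ℝ :=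
  if u * tri a b m 0 = v * tri a b (m + 1) 0 then 1 else 0

section zdens
variable {p : ℕ} [hp : Fact p.Prime] (a b : ZMod p)
  (hp2 : 2 < p) (hT : ∀ n < p, tri a b n 0 ≠ 0)
include hp2 hT

lemma ind_small (u v : ZMod p) (i r : ℕ) (hr : r < p - 1) :
    ind a b u v (p * i + r) = ind a b u v r := by
  unfold ind
  congr 1
  have := T_ne a b hp2 hT i
  rw [add_assoc, lucas a b _ _ (by omega), lucas a b _ _ (by omega), mul_left_comm,
    mul_left_comm v, mul_right_inj' this]

lemma ind_last (u v : ZMod p) (i : ℕ) :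
    ind a b u v (p * i + (p - 1)) = ind a b (u * tri a b (p-1) 0) v i := by
  unfold ind
  congr 1
  rw [show p * i + (p - 1) + 1 = p * (i + 1) + 0 by rw [mul_add]; omega,
    lucas a b _ _ (by omega), lucas a b _ _ (by omega)]
  have : tri a b 0 0 = 1 := by simp [tri_zero]
  rw [this, mul_one, mul_assoc, mul_comm (tri a b i 0)]

lemma ind_dens (u v : ZMod p) : HasD p (ind a b u v)
    (((∑ r ∈ Finset.range (p - 1), ind a b u v r) * p +
      ∑ r ∈ Finset.range (p - 1), ind a b (u * tri a b (p-1) 0) v r) /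
      (((p : ℝ) - 1) * (p + 1))) := by
  have h0 : ∀ u v i, 0 ≤ ind a b u v i := by intro u v i; unfold ind; split_ifs <;> norm_num
  have h1 : ∀ u v i, ind a b u v i ≤ 1 := by intro u v i; unfold ind; split_ifs <;> norm_num
  apply dens_pair p (by omega) _ (ind a b (u * tri a b (p-1) 0) v) _ _ (h0 _ _) (h1 _ _) (h0 _ _)
    (h1 _ _) (ind_small a b hp2 hT u v) (ind_last a b hp2 hT u v) (ind_small a b hp2 hT _ v)
  intro i
  rw [ind_last a b hp2 hT, mul_assoc, chi_sq a b hp2 hT, mul_one]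

/-- reflection of the counting sets -/
lemma ind_reflect (w : ZMod p) :
    ∑ r ∈ Finset.range (p - 1), ind a b ((b^2-4*a^2) * w) b r =
    ∑ r ∈ Finset.range (p - 1), ind a b b w r := by
  rw [← Finset.sum_range_reflect]
  apply Finset.sum_congr rfl
  intro m hm
  rw [Finset.mem_range] at hm
  unfold ind
  congr 1
  have hD := D_ne a b hp2 hT
  have hc := hT (p-1) (by omega)
  have r1 := (reflect a b hp2 m).1 (p - 1 - m) (by omega)
  have r2 := (reflect a b hp2 m).2 (p - 1 - 1 - m) (by omega)
  rw [show p - 1 - 1 - m + 1 = p - 1 - m by omega]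
  apply propext
  rw [← mul_right_inj' (pow_ne_zero m hD)]
  have x1 : (b^2-4*a^2)^m * ((b^2-4*a^2) * w * tri a b (p - 1 - 1 - m) 0) =
      tri a b (p-1) 0 * (w * tri a b (m+1) 0) := by
    linear_combination w * r2
  have x2 : (b^2-4*a^2)^m * (b * tri a b (p - 1 - m) 0) =
      tri a b (p-1) 0 * (b * tri a b m 0) := by
    linear_combination b * r1
  rw [x1, x2, mul_right_inj' hc]
  exact eq_comm

end zdens
open scoped Classical in
theorem stmt13 (p : ℕ) (hp : p.Prime) (hp2 : 2 < p) (a b : ℤ) (ha : ¬ (p : ℤ) ∣ a)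
    (hT : ∀ n < p, ¬ (p : ℤ) ∣ genTrinomial a b n) :
    Tendsto
      (fun N : ℕ =>
        (((Finset.range N).filter (fun n => (p : ℤ) ∣ genMotzkin a b n)).card : ℝ) / N)
      atTop
      (nhds
        ((((Finset.range (p - 2)).filter (fun n => (p : ℤ) ∣ genMotzkin a b n)).card : ℝ) / p +
         2 * (((Finset.range (p - 1)).filter
            (fun m => b * genTrinomial a b m ≡
              genTrinomial a b (p - 1) * genTrinomial a b (m + 1) [ZMOD (p : ℤ)])).card : ℝ) /
            (((p : ℝ) - 1) * ((p : ℝ) + 1)) +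
         2 * (((Finset.range (p - 1)).filter
            (fun m => b * genTrinomial a b m ≡ genTrinomial a b (m + 1) [ZMOD (p : ℤ)])).card : ℝ) /
            (((p : ℝ) - 1) * (p : ℝ) * ((p : ℝ) + 1)))) := by
  have : Fact p.Prime := ⟨hp⟩
  have hdvd : ∀ x : ℤ, ((p : ℤ) ∣ x) ↔ ((x : ZMod p) = 0) := fun x =>
    (ZMod.intCast_zmod_eq_zero_iff_dvd x p).symm
  obtain ⟨α, hα⟩ : ∃ α : ZMod p, α = a := ⟨_, rfl⟩
  obtain ⟨β, hβ⟩ : ∃ β : ZMod p, β = b := ⟨_, rfl⟩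
  have hTc : ∀ n, ((genTrinomial a b n : ℤ) : ZMod p) = tri α β n 0 := by
    intro n; rw [genT_cast, hα, hβ]
  have hMc : ∀ n, ((p : ℤ) ∣ genMotzkin a b n) ↔ tri α β n 0 - tri α β n 2 = 0 := by
    intro n; rw [hdvd, genM_cast, hα, hβ]
  have ha' : α ≠ 0 := by rw [hα]; rwa [hdvd] at ha
  have hT' : ∀ n < p, tri α β n 0 ≠ 0 := by
    intro n hn
    have := hT n hn
    rwa [hdvd, hTc] at this
  have h2 : (2 : ZMod p) * α ^ 2 ≠ 0 := by
    have : (2 : ZMod p) ≠ 0 := by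
      intro h
      have : ((2 : ℕ) : ZMod p) = 0 := by exact_mod_cast h
      rw [ZMod.natCast_eq_zero_iff] at this
      have := Nat.le_of_dvd (by norm_num) this
      omega
    exact mul_ne_zero this (pow_ne_zero _ ha')
  set χ := tri α β (p-1) 0 with hχ
  have hχχ : χ * χ = 1 := chi_sq α β hp2 hT'
  have hχ0 : χ ≠ 0 := hT' _ (by omega)
  have hF := ind_dens α β hp2 hT' β χ
  have hG := ind_dens α β hp2 hT' ((β^2-4*α^2) * χ) β
  rw [← hχ] at hF hG
  rw [ind_reflect α β hp2 hT', mul_assoc, hχχ, ind_reflect α β hp2 hT'] at hG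
  have hB : ∀ r, ind α β (β * χ) χ r = ind α β β 1 r := by
    intro r
    unfold ind
    congr 1
    apply propext
    rw [mul_comm β, mul_assoc, mul_right_inj' hχ0, one_mul]
  simp only [hB] at hF
  let s : ℕ → ℝ := fun n => if (p : ℤ) ∣ genMotzkin a b n then 1 else 0
  have key := dens_final p hp2 s _ _ s _ _
    (fun i => by simp only [s]; split_ifs <;> norm_num)
    (fun i => by simp only [s]; split_ifs <;> norm_num) ?_ ?_ ?_ hF hG
  · have hfin := key.tendsto (by omega)
    have hcard : ∀ (N : ℕ) (P : ℕ → Prop) [DecidablePred P],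
        (((Finset.range N).filter P).card : ℝ) = ∑ i ∈ Finset.range N, if P i then 1 else 0 := by
      intro N P _; rw [Finset.sum_boole]
    simp only [hcard]
    have hA : ∀ m, (b * genTrinomial a b m ≡
        genTrinomial a b (p - 1) * genTrinomial a b (m + 1) [ZMOD (p : ℤ)]) ↔
        β * tri α β m 0 = χ * tri α β (m + 1) 0 := by
      intro m
      rw [← ZMod.intCast_eq_intCast_iff]
      push_cast
      rw [hTc, hTc, hTc, ← hβ]
    have hA' : ∀ m, (b * genTrinomial a b m ≡ genTrinomial a b (m + 1) [ZMOD (p : ℤ)]) ↔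
        β * tri α β m 0 = 1 * tri α β (m + 1) 0 := by
      intro m
      rw [← ZMod.intCast_eq_intCast_iff]
      push_cast
      rw [hTc, hTc, ← hβ, one_mul]
    simp only [hA, hA']
    simp only [ind, s] at hfin
    convert hfin using 2
    have hp' : (2 : ℝ) < p := by exact_mod_cast hp2
    have n1 : (p : ℝ) - 1 ≠ 0 := by linarith
    have n2 : (p : ℝ) + 1 ≠ 0 := by linarith
    field_simp
    ring
  · intro i r hr
    simp only [s]
    congr 1
    apply propext
    rw [hMc, hMc, lucas α β _ _ (by omega), motz_small α β _ _ (by omega), ← mul_sub,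
      mul_eq_zero, or_iff_right (T_ne α β hp2 hT' i)]
  · intro i
    simp only [s, ind]
    congr 1
    apply propext
    rw [hMc, ← mul_right_inj' h2, mul_zero, motz_2 α β hp2 ha' hT', ← hχ, sub_eq_zero,
      ← mul_right_inj' hχ0, show χ * (β * χ * tri α β i 0) = χ * χ * (β * tri α β i 0) by ring,
      hχχ, one_mul]
  · intro i
    simp only [s, ind]
    congr 1
    apply propext
    rw [hMc, ← mul_right_inj' h2, mul_zero, motz_1 α β hp2 ha' hT', ← hχ, sub_eq_zero]
    exact eq_comm
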